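/- Let n ≥ 2 be an integer and a, λ ∈ ℂ with λ^n + a ≠ 0. Then the matrix Λₙ(a)·(λ·I + Λₙ(a))⁻¹ is the Toeplitz matrix E with entries E_{i,j} = λ^{i−j}·a/(λ^n + a) when i ≥ j and E_{i,j} = −λ^{n+i−j}/(λ^n + a) when i < j (indices 0,…,n−1). -/

import Mathlib

/-!
Left multiplication by `Λₙ(a)` is a twisted shift of rows: row `i < n - 1` of `Λₙ(a) * M` is minus
row `i + 1` of `M`, and the last row is `a` times row `0` of `M` (`LamMat_mul_apply_of_lt`,
`LamMat_mul_apply_last`). Applied to the Toeplitz matrix `R = lamRes n a lam` this gives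
`Λₙ(a) * R = E`, while `lam • R + E = 1` holds entrywise. Hence `(lam • 1 + Λₙ(a)) * R = 1`, so `R`
is the resolvent and the product in question is `Λₙ(a) * R = E`.
-/

/-- The companion-type matrix `Λₙ(a)`: entries `-1` on the superdiagonal,
`a` in the bottom-left corner, `0` elsewhere. -/
def LamMat (n : ℕ) (a : ℂ) : Matrix (Fin n) (Fin n) ℂ :=
  Matrix.of fun i j =>
    if (j : ℕ) = (i : ℕ) + 1 then -1
    else if (i : ℕ) = n - 1 ∧ (j : ℕ) = 0 then a
    else 0

/-- The Toeplitz matrix `E` with `E_{i,j} = λ^{i−j}·a/(λ^n + a)` for `i ≥ j`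
and `E_{i,j} = −λ^{n+i−j}/(λ^n + a)` for `i < j`. -/
noncomputable def Emat (n : ℕ) (a lam : ℂ) : Matrix (Fin n) (Fin n) ℂ :=
  Matrix.of fun i j =>
    if (j : ℕ) ≤ (i : ℕ) then lam ^ ((i : ℕ) - (j : ℕ)) * a / (lam ^ n + a)
    else -(lam ^ (n + (i : ℕ) - (j : ℕ))) / (lam ^ n + a)

/-- The explicit inverse of `lam • 1 + Λₙ(a)`. The exponents are arranged so that the natural-number
subtractions do not truncate. -/
noncomputable def lamRes (n : ℕ) (a lam : ℂ) : Matrix (Fin n) (Fin n) ℂ :=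
  Matrix.of fun i j =>
    if (i : ℕ) ≤ (j : ℕ) then lam ^ (n + (i : ℕ) - (j : ℕ) - 1) / (lam ^ n + a)
    else -(lam ^ ((i : ℕ) - (j : ℕ) - 1) * a) / (lam ^ n + a)

theorem LamMat_mul_apply_of_lt {n : ℕ} (a : ℂ) (M : Matrix (Fin n) (Fin n) ℂ) (i j : Fin n)
    (hi : (i : ℕ) + 1 < n) : (LamMat n a * M) i j = -M ⟨i + 1, hi⟩ j := by
  rw [Matrix.mul_apply, Finset.sum_eq_single ⟨(i : ℕ) + 1, hi⟩]
  · simp [LamMat]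
  · intro k _ hk
    have h1 : (k : ℕ) ≠ (i : ℕ) + 1 := fun h => hk (Fin.ext h)
    have h2 : ¬((i : ℕ) = n - 1 ∧ (k : ℕ) = 0) := by omega
    simp only [LamMat, Matrix.of_apply, if_neg h1, if_neg h2, zero_mul]
  · simp

theorem LamMat_mul_apply_last {n : ℕ} (a : ℂ) (M : Matrix (Fin n) (Fin n) ℂ) (i j : Fin n)
    (hn : 0 < n) (hi : (i : ℕ) = n - 1) : (LamMat n a * M) i j = a * M ⟨0, hn⟩ j := by
  rw [Matrix.mul_apply, Finset.sum_eq_single ⟨0, hn⟩]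
  · simp [LamMat, hi]
  · intro k _ hk
    have h1 : (k : ℕ) ≠ (i : ℕ) + 1 := by omega
    have h2 : ¬((i : ℕ) = n - 1 ∧ (k : ℕ) = 0) := fun h => hk (Fin.ext h.2)
    simp only [LamMat, Matrix.of_apply, if_neg h1, if_neg h2, zero_mul]
  · simp

theorem LamMat_mul_lamRes (n : ℕ) (a lam : ℂ) : LamMat n a * lamRes n a lam = Emat n a lam := by
  ext i j
  by_cases hi : (i : ℕ) + 1 < n
  · rw [LamMat_mul_apply_of_lt a _ i j hi]
    simp only [lamRes, Emat, Matrix.of_apply]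
    by_cases hij : (j : ℕ) ≤ i
    · rw [if_neg (by omega), if_pos hij, show (i : ℕ) + 1 - j - 1 = i - j by omega]
      ring
    · rw [if_pos (by omega), if_neg hij, show n + ((i : ℕ) + 1) - j - 1 = n + i - j by omega]
      ring
  · rw [LamMat_mul_apply_last a _ i j (by omega) (by omega)]
    simp only [lamRes, Emat, Matrix.of_apply]
    rw [if_pos (Nat.zero_le _), if_pos (by omega), show n + 0 - (j : ℕ) - 1 = i - j by omega]
    ring

theorem smul_lamRes_add_Emat (n : ℕ) (a lam : ℂ) (h : lam ^ n + a ≠ 0) :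
    lam • lamRes n a lam + Emat n a lam = 1 := by
  ext i j
  simp only [lamRes, Emat, Matrix.of_apply, Matrix.add_apply, Matrix.smul_apply, smul_eq_mul]
  rcases lt_trichotomy (i : ℕ) j with hij | hij | hij
  · rw [if_pos hij.le, if_neg (by omega), Matrix.one_apply_ne (Fin.ne_of_val_ne hij.ne),
      show n + (i : ℕ) - j = (n + i - j - 1) + 1 by omega, Nat.add_sub_cancel]
    ring
  · obtain rfl := Fin.ext hij
    obtain ⟨m, hm⟩ : ∃ m, n = m + 1 := ⟨n - 1, by omega⟩
    rw [if_pos le_rfl, if_pos le_rfl, Matrix.one_apply_eq, show n + (i : ℕ) - i - 1 = m by omega,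
      Nat.sub_self, ← mul_div_assoc, ← pow_succ', ← hm, pow_zero, one_mul, ← add_div, div_self h]
  · rw [if_neg (by omega), if_pos hij.le, Matrix.one_apply_ne (Fin.ne_of_val_ne hij.ne'),
      show (i : ℕ) - j = (i - j - 1) + 1 by omega, Nat.add_sub_cancel]
    ring


/-- If `λ^n + a ≠ 0`, then `Λₙ(a)·(λ·I + Λₙ(a))⁻¹` is the Toeplitz matrix `E`. -/
theorem LamMat_mul_resolvent (n : ℕ) (hn : 2 ≤ n) (a lam : ℂ)
    (h : lam ^ n + a ≠ 0) :
    LamMat n a * (lam • (1 : Matrix (Fin n) (Fin n) ℂ) + LamMat n a)⁻¹ =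
      Emat n a lam := by
  have hR : (lam • (1 : Matrix (Fin n) (Fin n) ℂ) + LamMat n a) * lamRes n a lam = 1 := by
    rw [add_mul, smul_mul_assoc, one_mul, LamMat_mul_lamRes, smul_lamRes_add_Emat n a lam h]
  rw [Matrix.inv_eq_right_inv hR, LamMat_mul_lamRes]
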